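/- arXiv:2401.11016 — 2 statements merged into one kernel-verified Lean document; each statement's English description precedes it below -/
import Mathlib

section
/- If Σ_{i∈U} p_i ≥ αk for some α > 1, then the total consideration probability of consideration sets of size exactly k satisfies Σ_{C⊆U, |C|=k} Pr_C(C) ≤ (α e^{1-α})^k / (1 - (α e^{1-α})^k). -/
open scoped Classical
open Finset

noncomputable section

/-- Weight of a consideration set `C`: each item in `C` is considered (prob `p i`),
each item outside is not considered (prob `1 - p j`). -/
def considerWeight (n : ℕ) (p : Fin n → ℝ) (C : Finset (Fin n)) : ℝ :=
  (∏ i ∈ C, p i) * ∏ j ∈ Cᶜ, (1 - p j)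

/-- Normalizing constant `z_{k,p}`: total weight of consideration sets of size at least `k`. -/
def zConst (n k : ℕ) (p : Fin n → ℝ) : ℝ :=
  ∑ C ∈ Finset.univ.filter (fun C : Finset (Fin n) => k ≤ C.card), considerWeight n p C

/-- Probability of consideration set `C` (conditioned on `|C| ≥ k`). -/
def prC (n k : ℕ) (p : Fin n → ℝ) (C : Finset (Fin n)) : ℝ :=
  if k ≤ C.card then considerWeight n p C / zConst n k p else 0

/-- Plackett–Luce probability of the length-`k` ranking `r` given consideration set `C`. -/
def prPL (n k : ℕ) (u : Fin n → ℝ) (r : Fin k ↪ Fin n) (C : Finset (Fin n)) : ℝ :=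
  if ∀ t : Fin k, r t ∈ C then
    ∏ t : Fin k, Real.exp (u (r t)) /
      ∑ j ∈ C \ (Finset.Iio t).image r, Real.exp (u j)
  else 0

/-- Plackett–Luce-with-consideration (PL+C) probability of the ranking `r`. -/
def prPLC (n k : ℕ) (u p : Fin n → ℝ) (r : Fin k ↪ Fin n) : ℝ :=
  ∑ C : Finset (Fin n), prC n k p C * prPL n k u r C

/-- PL probability of a set of rankings. -/
def prPLset (n k : ℕ) (u : Fin n → ℝ) (R : Finset (Fin k ↪ Fin n)) (C : Finset (Fin n)) : ℝ :=
  ∑ r ∈ R, prPL n k u r C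

/-- PL+C probability of a set of rankings. -/
def prPLCset (n k : ℕ) (u p : Fin n → ℝ) (R : Finset (Fin k ↪ Fin n)) : ℝ :=
  ∑ r ∈ R, prPLC n k u p r

/-- `R_{i≤ℓ}`: the set of length-`k` rankings with item `i` among the top `ℓ` positions. -/
def topSet (n k : ℕ) (i : Fin n) (ℓ : ℕ) : Finset (Fin k ↪ Fin n) :=
  Finset.univ.filter (fun r => ∃ t : Fin k, (t : ℕ) < ℓ ∧ r t = i)

theorem cw_gen (n : ℕ) (p : Fin n → ℝ) (t : ℝ) :
    ∑ C : Finset (Fin n), t ^ C.card * considerWeight n p C = ∏ i, (t * p i + (1 - p i)) := by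
  rw [Finset.prod_add, Finset.powerset_univ]
  refine Finset.sum_congr rfl fun C _ => ?_
  rw [Finset.prod_mul_distrib, Finset.prod_const, considerWeight, Finset.compl_eq_univ_sdiff,
    mul_assoc]

theorem cw_nonneg (n : ℕ) (p : Fin n → ℝ) (hp : ∀ a, 0 < p a ∧ p a ≤ 1) (C : Finset (Fin n)) :
    0 ≤ considerWeight n p C :=
  mul_nonneg (Finset.prod_nonneg fun i _ => (hp i).1.le)
    (Finset.prod_nonneg fun i _ => sub_nonneg.2 (hp i).2)

theorem cw_chernoff (n k : ℕ) (p : Fin n → ℝ) (α : ℝ)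
    (hp : ∀ a, 0 < p a ∧ p a ≤ 1) (hα : 1 < α) (hsum : α * k ≤ ∑ a, p a) :
    ∑ C ∈ Finset.univ.filter (fun C : Finset (Fin n) => C.card ≤ k), considerWeight n p C ≤
      (α * Real.exp (1 - α)) ^ k := by
  have h0 : 0 < α := by linarith
  have hinv : α⁻¹ ≤ 1 := inv_le_one_of_one_le₀ hα.le
  have hinv0 : 0 < α⁻¹ := inv_pos.2 h0
  have h1 : ∏ i, (α⁻¹ * p i + (1 - p i)) ≤ Real.exp (1 - α) ^ k := by
    calc ∏ i, (α⁻¹ * p i + (1 - p i)) ≤ ∏ i, Real.exp (-(1 - α⁻¹) * p i) := by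
          refine Finset.prod_le_prod (fun i _ => ?_) (fun i _ => ?_)
          · have := mul_pos hinv0 (hp i).1
            linarith [(hp i).2]
          · have := Real.add_one_le_exp (-(1 - α⁻¹) * p i)
            linarith
      _ = Real.exp (-(1 - α⁻¹) * ∑ i, p i) := by
          rw [← Real.exp_sum, Finset.mul_sum]
      _ ≤ Real.exp (k * (1 - α)) := by
          apply Real.exp_le_exp.2
          have h2 := mul_le_mul_of_nonneg_left hsum (sub_nonneg.2 hinv)
          have h3 : (1 - α⁻¹) * (α * k) = k * (α - 1) := by field_simp
          linarith
      _ = _ := by rw [Real.exp_nat_mul]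
  rw [mul_pow]
  refine le_trans ?_ (mul_le_mul_of_nonneg_left h1 (pow_pos h0 k).le)
  rw [← cw_gen, Finset.mul_sum]
  refine le_trans (Finset.sum_le_sum (g := fun C => α ^ k * (α⁻¹ ^ C.card * considerWeight n p C))
    fun C hC => ?_) (Finset.sum_le_sum_of_subset_of_nonneg (Finset.subset_univ _) fun C _ _ => ?_)
  · have hC' : C.card ≤ k := by simpa using hC
    have : 1 ≤ α ^ k * α⁻¹ ^ C.card := by
      rw [inv_pow, ← div_eq_mul_inv, one_le_div (pow_pos h0 _)]
      exact pow_le_pow_right₀ hα.le hC'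
    rw [← mul_assoc]
    exact le_mul_of_one_le_left (cw_nonneg n p hp C) this
  · have := cw_nonneg n p hp C
    positivity

/-- the total consideration probability of sets of size exactly `k` is at most
`(α e^{1-α})^k / (1 - (α e^{1-α})^k)`. -/
theorem consider_exactly_k_bound (n k : ℕ) (p : Fin n → ℝ) (α : ℝ)
    (hp : ∀ a, 0 < p a ∧ p a ≤ 1) (hk : 1 ≤ k) (hkn : k ≤ n)
    (hα : 1 < α) (hsum : α * k ≤ ∑ a, p a) :
    ∑ C ∈ Finset.univ.filter (fun C : Finset (Fin n) => C.card = k), prC n k p C ≤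
      (α * Real.exp (1 - α)) ^ k / (1 - (α * Real.exp (1 - α)) ^ k) := by
  have hch := cw_chernoff n k p α hp hα hsum
  set q := (α * Real.exp (1 - α)) ^ k with hq
  have hq1 : q < 1 := by
    apply pow_lt_one₀ (by positivity) _ (by omega)
    have h1 : α < Real.exp (α - 1) := by
      have := Real.add_one_lt_exp (x := α - 1) (by linarith)
      linarith
    have h2 : Real.exp (α - 1) * Real.exp (1 - α) = 1 := by
      rw [← Real.exp_add]; simp
    refine lt_of_lt_of_eq ?_ h2
    exact mul_lt_mul_of_pos_right h1 (Real.exp_pos _)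
  have hq0 : 0 ≤ q := by positivity
  have htot : ∑ C : Finset (Fin n), considerWeight n p C = 1 := by
    have := cw_gen n p 1
    simpa using this
  have hz : 1 - q ≤ zConst n k p := by
    have hs := Finset.sum_filter_add_sum_filter_not Finset.univ
      (fun C : Finset (Fin n) => k ≤ C.card) (considerWeight n p)
    rw [htot] at hs
    have hle : ∑ C ∈ Finset.univ.filter (fun C : Finset (Fin n) => ¬ k ≤ C.card),
        considerWeight n p C ≤ ∑ C ∈ Finset.univ.filter (fun C : Finset (Fin n) => C.card ≤ k),
        considerWeight n p C := by
      refine Finset.sum_le_sum_of_subset_of_nonneg ?_ fun C _ _ => cw_nonneg n p hp C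
      intro C hC
      simp only [Finset.mem_filter, Finset.mem_univ, true_and] at hC ⊢
      omega
    unfold zConst
    linarith
  have hnum : ∑ C ∈ Finset.univ.filter (fun C : Finset (Fin n) => C.card = k),
      considerWeight n p C ≤ q := by
    refine le_trans (Finset.sum_le_sum_of_subset_of_nonneg ?_ fun C _ _ => cw_nonneg n p hp C) hch
    intro C hC
    simp only [Finset.mem_filter, Finset.mem_univ, true_and] at hC ⊢
    omega
  have heq : ∑ C ∈ Finset.univ.filter (fun C : Finset (Fin n) => C.card = k), prC n k p C =
      (∑ C ∈ Finset.univ.filter (fun C : Finset (Fin n) => C.card = k),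
        considerWeight n p C) / zConst n k p := by
    rw [Finset.sum_div]
    refine Finset.sum_congr rfl fun C hC => ?_
    have hC' : C.card = k := by simpa using hC
    rw [prC, if_pos hC'.ge]
  rw [heq]
  exact div_le_div₀ hq0 hnum (by linarith) hz
end
end

section
/- Let i, j ∈ U with i ≠ j, and let Pr'_{PL+C} denote PL+C probabilities after replacing p_j by some p_j' with p_j < p_j' ≤ 1 (all other parameters unchanged). If, after the replacement, at least k+1 of the consideration probabilities equal 1, then Pr'_{PL+C}(R_{i=1}) ≤ Pr_{PL+C}(R_{i=1}), where R_{i=1} is the set of length-k rankings with item i in first position. -/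
open scoped Classical
open Finset

noncomputable section

/-- Factorwise version of PL for arbitrary functions. -/
def plG (n k : ℕ) (u : Fin n → ℝ) (C : Finset (Fin n)) (r : Fin k → Fin n) : ℝ :=
  ∏ t : Fin k, if r t ∈ C \ (Finset.Iio t).image r then
    Real.exp (u (r t)) / ∑ j ∈ C \ (Finset.Iio t).image r, Real.exp (u j) else 0

theorem plG_cons (n k : ℕ) (u : Fin n → ℝ) (C : Finset (Fin n)) (a : Fin n) (r : Fin k → Fin n) :
    plG n (k+1) u C (Fin.cons a r) =
      (if a ∈ C then Real.exp (u a) / ∑ j ∈ C, Real.exp (u j) else 0) *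
        plG n k u (C.erase a) r := by
  unfold plG
  rw [Fin.prod_univ_succ]
  have h0 : (Finset.Iio (0 : Fin (k+1))) = ∅ := by
    ext x; simp
  congr 1
  · simp [h0]
  · apply Finset.prod_congr rfl
    intro t _
    have h1 : C \ (Finset.Iio t.succ).image (Fin.cons a r : Fin (k+1) → Fin n)
        = C.erase a \ (Finset.Iio t).image r := by
      ext x
      simp only [Finset.mem_sdiff, Finset.mem_image, Finset.mem_Iio, Finset.mem_erase,
        Fin.exists_fin_succ, Fin.cons_zero, Fin.cons_succ, Fin.succ_lt_succ_iff, Fin.succ_pos,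
        true_and]
      grind
    rw [h1]
    simp

theorem sum_plG (n : ℕ) (u : Fin n → ℝ) (k : ℕ) : ∀ (C : Finset (Fin n)), k ≤ C.card →
    ∑ r : Fin k → Fin n, plG n k u C r = 1 := by
  induction k with
  | zero => intro C _; simp [plG]
  | succ k ih =>
    intro C hC
    rw [← (Fin.consEquiv (fun _ : Fin (k+1) => Fin n)).sum_comp, Fintype.sum_prod_type]
    have hne : C.Nonempty := by rw [← Finset.card_pos]; omega
    have hpos : 0 < ∑ j ∈ C, Real.exp (u j) := Finset.sum_pos (fun _ _ => Real.exp_pos _) hne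
    have : ∀ a : Fin n, ∑ r : Fin k → Fin n,
        plG n (k+1) u C ((Fin.consEquiv (fun _ : Fin (k+1) => Fin n)) (a, r)) =
        if a ∈ C then Real.exp (u a) / ∑ j ∈ C, Real.exp (u j) else 0 := by
      intro a
      have : ∀ r : Fin k → Fin n, plG n (k+1) u C
          ((Fin.consEquiv (fun _ : Fin (k+1) => Fin n)) (a, r)) = _ := fun r => plG_cons n k u C a r
      simp only [this]
      rw [← Finset.mul_sum]
      split_ifs with ha
      · rw [ih, mul_one]
        rw [Finset.card_erase_of_mem ha]; omega
      · simp
    rw [Finset.sum_congr rfl (fun a _ => this a), ← Finset.sum_filter]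
    simp only [Finset.filter_mem_eq_inter, Finset.univ_inter]
    rw [← Finset.sum_div, div_self hpos.ne']

theorem plG_emb (n k : ℕ) (u : Fin n → ℝ) (C : Finset (Fin n)) (r : Fin k ↪ Fin n) :
    prPL n k u r C = plG n k u C r := by
  unfold prPL plG
  have hm : ∀ t : Fin k, r t ∈ C \ (Finset.Iio t).image r ↔ r t ∈ C := by
    intro t
    simp
  simp only [hm]
  split_ifs with h
  · simp [h]
  · push Not at h
    obtain ⟨t, ht⟩ := h
    exact (Finset.prod_eq_zero (Finset.mem_univ t) (by simp [ht])).symm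

theorem plG_not_inj (n k : ℕ) (u : Fin n → ℝ) (C : Finset (Fin n)) (r : Fin k → Fin n)
    (h : ¬ Function.Injective r) : plG n k u C r = 0 := by
  have : ∃ s t : Fin k, s < t ∧ r s = r t := by
    unfold Function.Injective at h
    push Not at h
    obtain ⟨s, t, h1, h2⟩ := h
    rcases lt_or_gt_of_ne h2 with h3 | h3
    · exact ⟨s, t, h3, h1⟩
    · exact ⟨t, s, h3, h1.symm⟩
  obtain ⟨s, t, hst, he⟩ := this
  unfold plG
  apply Finset.prod_eq_zero (Finset.mem_univ t)
  rw [if_neg]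
  simp only [Finset.mem_sdiff, Finset.mem_image, Finset.mem_Iio, not_and, not_not]
  exact fun _ => ⟨s, hst, he⟩

/-- The MNL choice probability. -/
def mnl (n : ℕ) (u : Fin n → ℝ) (i : Fin n) (C : Finset (Fin n)) : ℝ :=
  if i ∈ C then Real.exp (u i) / ∑ j ∈ C, Real.exp (u j) else 0

theorem top_sum (n k : ℕ) (u : Fin n → ℝ) (i : Fin n) (C : Finset (Fin n)) (hC : k + 1 ≤ C.card) :
    ∑ r ∈ topSet n (k+1) i 1, prPL n (k+1) u r C = mnl n u i C := by
  have hs : ∑ r ∈ topSet n (k+1) i 1, prPL n (k+1) u r C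
      = ∑ r : Fin k → Fin n, plG n (k+1) u C (Fin.cons i r) := by
    apply Finset.sum_bij_ne_zero (fun (r : Fin (k+1) ↪ Fin n) _ _ => (Fin.tail r : Fin k → Fin n))
    · intros; simp
    · intro r hr _ r' hr' _ h
      simp only [topSet, Finset.mem_filter, Finset.mem_univ, true_and] at hr hr'
      obtain ⟨t, ht, h1⟩ := hr
      obtain ⟨t', ht', h1'⟩ := hr'
      have e : t = 0 := Fin.ext (Nat.lt_one_iff.1 ht)
      have e' : t' = 0 := Fin.ext (Nat.lt_one_iff.1 ht')
      subst e e'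
      ext x
      rw [← Fin.cons_self_tail r, ← Fin.cons_self_tail r', h, h1, h1']
    · intro r _ hr
      have hinj : Function.Injective (Fin.cons i r : Fin (k+1) → Fin n) := by
        by_contra hc
        exact hr (plG_not_inj _ _ _ _ _ hc)
      refine ⟨⟨Fin.cons i r, hinj⟩, ?_, ?_, ?_⟩
      · simp only [topSet, Finset.mem_filter, Finset.mem_univ, true_and]
        exact ⟨0, by simp, by simp⟩
      · rw [plG_emb]; exact hr
      · simp
    · intro r hr _
      simp only [topSet, Finset.mem_filter, Finset.mem_univ, true_and] at hr
      obtain ⟨t, ht, h1⟩ := hr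
      have e : t = 0 := Fin.ext (Nat.lt_one_iff.1 ht)
      subst e
      rw [plG_emb, ← h1, Fin.cons_self_tail]
  rw [hs]
  simp only [plG_cons]
  rw [← Finset.mul_sum]
  unfold mnl
  split_ifs with hi
  · rw [sum_plG, mul_one]
    rw [Finset.card_erase_of_mem hi]; omega
  · simp

theorem sum_weight (n : ℕ) (p : Fin n → ℝ) : ∑ C : Finset (Fin n), considerWeight n p C = 1 := by
  have := Finset.prod_add p (fun j => 1 - p j) Finset.univ
  simp only [add_sub_cancel, Finset.prod_const_one, Finset.powerset_univ] at this
  rw [this]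
  rfl

theorem plc_eq (n k : ℕ) (u p : Fin n → ℝ) (i : Fin n)
    (S : Finset (Fin n)) (hS : k + 1 ≤ S.card) (h1 : ∀ a ∈ S, p a = 1) :
    prPLCset n (k+1) u p (topSet n (k+1) i 1) = ∑ C, considerWeight n p C * mnl n u i C := by
  have hw : ∀ C, ¬ (k + 1 ≤ C.card) → considerWeight n p C = 0 := by
    intro C hC
    have : ¬ S ⊆ C := fun h => hC (hS.trans (Finset.card_le_card h))
    rw [Finset.not_subset] at this
    obtain ⟨a, ha, hac⟩ := this
    unfold considerWeight
    rw [Finset.prod_eq_zero (s := Cᶜ) (i := a) (by simpa using hac) (by simp [h1 a ha]), mul_zero]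
  have hz : zConst n (k+1) p = 1 := by
    rw [← sum_weight n p, zConst, Finset.sum_filter]
    apply Finset.sum_congr rfl
    intro C _
    split_ifs with h
    · rfl
    · exact (hw C h).symm
  unfold prPLCset prPLC
  rw [Finset.sum_comm]
  apply Finset.sum_congr rfl
  intro C _
  rw [← Finset.mul_sum]
  unfold prC
  split_ifs with h
  · rw [hz, div_one, top_sum n k u i C h]
  · rw [hw C h]; simp

theorem mnl_insert (n : ℕ) (u : Fin n → ℝ) (i j : Fin n) (hij : i ≠ j) (C : Finset (Fin n)) :
    mnl n u i (insert j C) ≤ mnl n u i C := by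
  unfold mnl
  simp only [Finset.mem_insert, hij, false_or]
  split_ifs with hi
  · apply div_le_div_of_nonneg_left (Real.exp_pos _).le
    · exact Finset.sum_pos (fun _ _ => Real.exp_pos _) ⟨i, hi⟩
    · exact Finset.sum_le_sum_of_subset_of_nonneg (Finset.subset_insert _ _)
        (fun _ _ _ => (Real.exp_pos _).le)
  · exact le_rfl

theorem split_sum (n : ℕ) (p : Fin n → ℝ) (j : Fin n) (q : ℝ) (g : Finset (Fin n) → ℝ) :
    ∑ C, considerWeight n (Function.update p j q) C * g C =
      ∑ C ∈ (Finset.univ.erase j).powerset,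
        ((∏ a ∈ C, p a) * ∏ a ∈ (insert j C)ᶜ, (1 - p a)) *
          ((1 - q) * g C + q * g (insert j C)) := by
  have hu : (Finset.univ : Finset (Finset (Fin n))) =
      (insert j (Finset.univ.erase j : Finset (Fin n))).powerset := by
    rw [Finset.insert_erase (Finset.mem_univ j), Finset.powerset_univ]
  rw [hu, Finset.sum_powerset_insert (by simp), ← Finset.sum_add_distrib]
  apply Finset.sum_congr rfl
  intro C hC
  have hj : j ∉ C := fun h => by simpa using (Finset.mem_powerset.1 hC) h
  have e1 : ∏ a ∈ C, Function.update p j q a = ∏ a ∈ C, p a :=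
    Finset.prod_congr rfl (fun a ha => by
      rw [Function.update_of_ne]
      rintro rfl
      exact hj ha)
  have e2 : ∏ a ∈ (insert j C)ᶜ, (1 - Function.update p j q a) = ∏ a ∈ (insert j C)ᶜ, (1 - p a) :=
    Finset.prod_congr rfl (fun a ha => by
      rw [Function.update_of_ne]
      rintro rfl
      simp at ha)
  have e3 : Cᶜ = insert j (insert j C)ᶜ := by
    ext x; simp only [Finset.mem_compl, Finset.mem_insert]; grind
  unfold considerWeight
  rw [Finset.prod_insert hj, e1, e2]
  rw [e3, Finset.prod_insert (by simp), e2]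
  simp only [Function.update_self]
  ring

/-- if after increasing `p j` at least `k+1` consideration probabilities
equal 1, then increasing `p j` cannot increase the probability that `i` is ranked first. -/
theorem increase_pj_no_error (n k : ℕ) (u p : Fin n → ℝ) (i j : Fin n) (pj' : ℝ)
    (hp : ∀ a, 0 < p a ∧ p a ≤ 1)
    (hij : i ≠ j) (hlt : p j < pj') (hle : pj' ≤ 1)
    (hones : k + 1 ≤
      (Finset.univ.filter (fun a : Fin n => Function.update p j pj' a = 1)).card) :
    prPLCset n k u (Function.update p j pj') (topSet n k i 1) ≤
      prPLCset n k u p (topSet n k i 1) := by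
  cases k with
  | zero => simp [prPLCset, topSet]
  | succ k =>
    set S := (Finset.univ.filter (fun a : Fin n => Function.update p j pj' a = 1)).erase j with hSd
    have hS : k + 1 ≤ S.card := by
      exact le_trans (Nat.le_sub_of_add_le hones) Finset.pred_card_le_card_erase
    have h1' : ∀ a ∈ S, Function.update p j pj' a = 1 := by
      intro a ha
      simp only [hSd, Finset.mem_erase, Finset.mem_filter] at ha
      exact ha.2.2
    have h1 : ∀ a ∈ S, p a = 1 := by
      intro a ha
      have := h1' a ha
      rwa [Function.update_of_ne (Finset.ne_of_mem_erase ha)] at this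
    rw [plc_eq n k u _ i S hS h1', plc_eq n k u p i S hS h1]
    have hs := split_sum n p j (p j) (mnl n u i)
    rw [Function.update_eq_self] at hs
    rw [hs, split_sum]
    apply Finset.sum_le_sum
    intro C _
    apply mul_le_mul_of_nonneg_left
    · nlinarith [mnl_insert n u i j hij C]
    · exact mul_nonneg (Finset.prod_nonneg fun a _ => (hp a).1.le)
        (Finset.prod_nonneg fun a _ => sub_nonneg.2 (hp a).2)
end
end
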